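/- For every a > 0 one has inf{ E_KdV(φ) : φ ∈ H¹(ℝ), ∫φ² dx = 2aα_KdV } = a^{5/3}·c_KdV. Specifically: every φ ∈ H¹(ℝ) with ∫φ² dx = 2aα_KdV satisfies E_KdV(φ) ≥ a^{5/3}c_KdV, and the function x ↦ a^{2/3}·φ_KdV(a^{1/3}x) satisfies the constraint and attains the value a^{5/3}c_KdV. -/

import Mathlib

open MeasureTheory

noncomputable def sech (x : ℝ) : ℝ := 1 / Real.cosh x

/-- `H1Pair φ φ'` expresses that `φ` belongs to `H¹(ℝ)` with weak derivative `φ'`. -/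
def H1Pair (φ φ' : ℝ → ℝ) : Prop :=
  Continuous φ ∧ Integrable (fun x => (φ x) ^ 2) ∧ Integrable (fun x => (φ' x) ^ 2) ∧
    ∀ a b : ℝ, a ≤ b → φ b - φ a = ∫ t in a..b, φ' t

/-- The Korteweg–de Vries energy `E_KdV(φ) = (1/2)∫ (c φ'² + d φ³) dx`. -/
noncomputable def EKdV (c d : ℝ) (φ φ' : ℝ → ℝ) : ℝ :=
  (1 / 2) * ∫ x : ℝ, (c * (φ' x) ^ 2 + d * (φ x) ^ 3)

open Filter Topology Set in
lemma ac_comp {φ G : ℝ → ℝ} {a b : ℝ} (hφ : AbsolutelyContinuousOnInterval φ a b)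
    (hG : ContDiff ℝ 1 G) : AbsolutelyContinuousOnInterval (fun x => G (φ x)) a b := by
  obtain ⟨C, hC⟩ := hφ.exists_bound
  obtain ⟨K, hK⟩ := (hG.contDiffOn (s := Icc (-C) C)).exists_lipschitzOnWith (by decide)
    (convex_Icc _ _) isCompact_Icc
  have hmem : ∀ x ∈ uIcc a b, φ x ∈ Icc (-C) C := fun x hx => abs_le.1 (hC x hx)
  rw [absolutelyContinuousOnInterval_iff] at hφ ⊢
  intro ε hε
  obtain ⟨δ, hδ, h⟩ := hφ (ε / (K + 1)) (by positivity)
  refine ⟨δ, hδ, fun E hE hE2 => ?_⟩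
  have h1 := h E hE hE2
  rw [lt_div_iff₀ (by positivity)] at h1
  refine lt_of_le_of_lt ?_ h1
  rw [Finset.sum_mul]
  refine Finset.sum_le_sum fun i hi => ?_
  have hE' := hE.1 i hi
  have := hK.dist_le_mul _ (hmem _ hE'.1) _ (hmem _ hE'.2)
  have h0 : 0 ≤ dist (φ (E.2 i).1) (φ (E.2 i).2) := dist_nonneg
  nlinarith

open Filter Topology Set in
lemma chain_rule {φ φ' G g : ℝ → ℝ} (hl : LocallyIntegrable φ')
    (hf : ∀ a b : ℝ, a ≤ b → φ b - φ a = ∫ t in a..b, φ' t)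
    (hG : ∀ s, HasDerivAt G (g s) s) (hg : Continuous g) {a b : ℝ} (_hab : a ≤ b) :
    ∫ x in a..b, g (φ x) * φ' x = G (φ b) - G (φ a) := by
  have hi : ∀ x y, IntervalIntegrable φ' volume x y := fun x y =>
    intervalIntegrable_iff.mpr <|
      (hl.integrableOn_isCompact isCompact_uIcc).mono_set uIoc_subset_uIcc
  have hφ : φ = fun x => φ 0 + ∫ t in (0:ℝ)..x, φ' t := by
    funext x
    rcases le_total 0 x with h | h
    · rw [← hf 0 x h]; ring
    · rw [intervalIntegral.integral_symm, ← hf x 0 h]; ring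
  have hφ2 : φ = fun x => φ a + ∫ t in a..x, φ' t := by
    funext x
    rcases le_total a x with h | h
    · rw [← hf a x h]; ring
    · rw [intervalIntegral.integral_symm, ← hf x a h]; ring
  have hac : AbsolutelyContinuousOnInterval φ a b := by
    rw [hφ2]
    have h1 : AbsolutelyContinuousOnInterval (fun _ : ℝ => φ a) a b :=
      (contDiff_const.contDiffOn (s := uIcc a b)).absolutelyContinuousOnInterval
    exact h1.add ((hi a b).absolutelyContinuousOnInterval_intervalIntegral (by simp))
  have hGc : ContDiff ℝ 1 G := by
    rw [contDiff_one_iff_deriv]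
    refine ⟨fun s => (hG s).differentiableAt, ?_⟩
    rwa [show deriv G = g from funext fun s => (hG s).deriv]
  rw [← (ac_comp hac hGc).integral_deriv_eq_sub]
  apply intervalIntegral.integral_congr_ae
  filter_upwards [_root_.LocallyIntegrable.ae_hasDerivAt_integral hl] with x hx _
  have h1 : HasDerivAt φ (φ' x) x := by
    have := (hx 0).const_add (φ 0)
    rwa [← hφ] at this
  exact ((hG (φ x)).comp x h1).deriv.symm

open Filter Topology Set in
lemma loc_int {φ φ' : ℝ → ℝ} (h : H1Pair φ φ') (hne : 0 < ∫ x, φ x ^ 2) :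
    LocallyIntegrable φ' := by
  obtain ⟨hc, h2, -, hf⟩ := h
  by_contra hn
  simp only [LocallyIntegrable, not_forall] at hn
  obtain ⟨p, hp⟩ := hn
  have key : ∀ a b, a < p → p < b → φ a = φ b := by
    intro a b ha hb
    have h1 := hf a b (ha.trans hb).le
    rw [intervalIntegral.integral_undef] at h1
    · linarith
    · intro hi
      rw [intervalIntegrable_iff_integrableOn_Ioc_of_le (ha.trans hb).le] at hi
      exact hp ⟨Ioc a b, Ioc_mem_nhds ha hb, hi⟩
  have hconst : ∀ x, φ x = φ (p + 1) := by
    have hlt : ∀ x, x < p → φ x = φ (p+1) := fun x hx => key _ _ hx (by linarith)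
    have hgt : ∀ x, p < x → φ x = φ (p+1) := fun x hx => by
      rw [← key (p-1) x (by linarith) hx]; exact key _ _ (by linarith) (by linarith)
    intro x
    have hcl : IsClosed {x | φ x = φ (p+1)} := isClosed_eq hc continuous_const
    have hd : Dense ({p}ᶜ : Set ℝ) := dense_compl_singleton p
    have := hcl.closure_subset_iff.2 (show ({p}ᶜ : Set ℝ) ⊆ _ from fun y hy => by
      rcases lt_or_gt_of_ne hy with h | h
      · exact hlt y h
      · exact hgt y h)
    rw [hd.closure_eq] at this
    exact this (mem_univ x)
  have : (fun x => φ x ^ 2) = fun _ => φ (p+1) ^ 2 := by funext x; rw [hconst]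
  rw [this] at hne h2
  rw [integrable_const_iff] at h2
  rcases h2 with h2 | h2
  · rw [h2] at hne; simp at hne
  · have := isFiniteMeasure_iff _ |>.1 h2
    simp at this

open Filter Topology Set in
lemma prod_int {φ φ' : ℝ → ℝ} (h : H1Pair φ φ') (hl : LocallyIntegrable φ') :
    Integrable (fun x => 2 * φ x * φ' x) := by
  obtain ⟨hc, h2, h3, -⟩ := h
  refine (h2.add h3).mono ?_ ?_
  · exact (continuous_const.mul hc).aestronglyMeasurable.mul hl.aestronglyMeasurable
  · filter_upwards with x
    simp only [Real.norm_eq_abs, Pi.add_apply]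
    rw [abs_of_nonneg (a := φ x ^ 2 + φ' x ^ 2) (by positivity), abs_le]
    constructor <;> nlinarith [sq_nonneg (φ x + φ' x), sq_nonneg (φ x - φ' x)]

open Filter Topology Set in
lemma tend_top {φ φ' : ℝ → ℝ} (h : H1Pair φ φ') (hl : LocallyIntegrable φ') :
    Tendsto φ atTop (𝓝 0) := by
  have hi := prod_int h hl
  have hch : ∀ b, 0 ≤ b → ∫ x in (0:ℝ)..b, 2 * φ x * φ' x = φ b ^ 2 - φ 0 ^ 2 := fun b hb =>
    chain_rule (G := fun s => s ^ 2) (g := fun s => 2 * s) hl h.2.2.2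
      (fun s => by simpa using hasDerivAt_pow 2 s) (by fun_prop) hb
  have ht := intervalIntegral_tendsto_integral_Ioi 0 hi.integrableOn tendsto_id
  have ht2 : Tendsto (fun x => φ x ^ 2) atTop
      (𝓝 ((∫ x in Ioi (0:ℝ), 2 * φ x * φ' x) + φ 0 ^ 2)) := by
    refine (ht.add_const (φ 0 ^ 2)).congr' ?_
    filter_upwards [eventually_ge_atTop 0] with b hb
    simp only [id]
    rw [hch b hb]; ring
  have h0 := IntegrableAtFilter.eq_zero_of_tendsto (μ := volume)
    ⟨univ, univ_mem, by simpa using h.2.1⟩ (fun s hs => by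
      rcases mem_atTop_sets.1 hs with ⟨b, hb⟩
      rw [← top_le_iff, ← Real.volume_Ici (a := b)]
      exact measure_mono hb) ht2
  rw [h0] at ht2
  have := ht2.sqrt
  simp only [Real.sqrt_sq_eq_abs, Real.sqrt_zero] at this
  exact tendsto_zero_iff_abs_tendsto_zero _ |>.2 this

open Filter Topology Set in
lemma tend_bot {φ φ' : ℝ → ℝ} (h : H1Pair φ φ') (hl : LocallyIntegrable φ') :
    Tendsto φ atBot (𝓝 0) := by
  have hi := prod_int h hl
  have hch : ∀ b, b ≤ 0 → ∫ x in b..0, 2 * φ x * φ' x = φ 0 ^ 2 - φ b ^ 2 := fun b hb =>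
    chain_rule (G := fun s => s ^ 2) (g := fun s => 2 * s) hl h.2.2.2
      (fun s => by simpa using hasDerivAt_pow 2 s) (by fun_prop) hb
  have ht := intervalIntegral_tendsto_integral_Iic 0 hi.integrableOn tendsto_id
  have ht2 : Tendsto (fun x => φ x ^ 2) atBot
      (𝓝 (φ 0 ^ 2 - (∫ x in Iic (0:ℝ), 2 * φ x * φ' x))) := by
    refine (ht.const_sub (φ 0 ^ 2)).congr' ?_
    filter_upwards [eventually_le_atBot 0] with b hb
    simp only [id]
    rw [hch b hb]; ring
  have h0 := IntegrableAtFilter.eq_zero_of_tendsto (μ := volume)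
    ⟨univ, univ_mem, by simpa using h.2.1⟩ (fun s hs => by
      rcases mem_atBot_sets.1 hs with ⟨b, hb⟩
      rw [← top_le_iff, ← Real.volume_Iic (a := b)]
      exact measure_mono hb) ht2
  rw [h0] at ht2
  have := ht2.sqrt
  simp only [Real.sqrt_sq_eq_abs, Real.sqrt_zero] at this
  exact tendsto_zero_iff_abs_tendsto_zero _ |>.2 this

lemma poly_ineq {t u : ℝ} (ht : 0 ≤ t) (hu : 0 ≤ u) :
    0 ≤ t ^ 5 - (5 / 2) * u ^ 3 * t ^ 2 + (3 / 2) * u ^ 5 := by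
  have : t ^ 5 - (5 / 2) * u ^ 3 * t ^ 2 + (3 / 2) * u ^ 5 =
      (t - u) ^ 2 * (t ^ 3 + 2 * u * t ^ 2 + 3 * u ^ 2 * t + (3 / 2) * u ^ 3) := by ring
  rw [this]; positivity

lemma final_ineq {c d B t u s J m : ℝ} (hc : 0 < c) (hB : 0 < B) (ht : 0 ≤ t) (hu : 0 < u)
    (hs : s * u = 2 * c * B) (hd : 4 * c * B ^ 2 = d * u ^ 2) (hm : m = 4 / 3 * (u ^ 2) ^ 2 / B)
    (hJ : 16 / 15 * s * t ^ 5 ≤ J + d * t ^ 2 * m) :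
    -(4 / 5) * d * (u ^ 2) ^ 3 / B ≤ J := by
  have hs' : s = 2 * c * B / u := by field_simp; linarith
  have hd' : d = 4 * c * B ^ 2 / u ^ 2 := by field_simp; linarith
  have hp := poly_ineq ht hu.le
  have e : (16 / 15 * s * t ^ 5 - d * t ^ 2 * m) - (-(4 / 5) * d * (u ^ 2) ^ 3 / B) =
      (32 / 15 * c * B / u) * (t ^ 5 - (5 / 2) * u ^ 3 * t ^ 2 + (3 / 2) * u ^ 5) := by
    rw [hs', hd', hm]; field_simp; ring
  have : 0 ≤ (32 / 15 * c * B / u) * (t ^ 5 - (5 / 2) * u ^ 3 * t ^ 2 + (3 / 2) * u ^ 5) := by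
    positivity
  linarith

noncomputable def Gf (M s : ℝ) : ℝ :=
  (2 / 5) * (M + s) ^ (5 / 2 : ℝ) - (2 * M / 3) * (M + s) ^ (3 / 2 : ℝ)

noncomputable def gf (M s : ℝ) : ℝ :=
  (M + s) ^ (3 / 2 : ℝ) - M * (M + s) ^ (1 / 2 : ℝ)

lemma Gf_deriv (M s : ℝ) : HasDerivAt (Gf M) (gf M s) s := by
  have h0 : HasDerivAt (fun s : ℝ => M + s) 1 s := (hasDerivAt_id s).const_add M
  have h1 := (h0.rpow_const (p := (5 / 2 : ℝ)) (Or.inr (by norm_num))).const_mul (2 / 5 : ℝ)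
  have h2 := (h0.rpow_const (p := (3 / 2 : ℝ)) (Or.inr (by norm_num))).const_mul (2 * M / 3)
  have h3 := h1.sub h2
  refine h3.congr_deriv ?_
  rw [gf]
  norm_num
  ring

lemma gf_cont (M : ℝ) : Continuous (gf M) := by
  unfold gf
  have h1 : Continuous fun s : ℝ => M + s := by fun_prop
  exact (h1.rpow_const (fun _ => Or.inr (by norm_num))).sub
    (continuous_const.mul (h1.rpow_const (fun _ => Or.inr (by norm_num))))

lemma gf_sq {M s : ℝ} (h : 0 ≤ M + s) : gf M s ^ 2 = s ^ 2 * (M + s) := by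
  have h1 : (M + s) ^ (3 / 2 : ℝ) = (M + s) * √(M + s) := by
    rw [Real.sqrt_eq_rpow, show (3 / 2 : ℝ) = 1 + 1 / 2 by norm_num,
      Real.rpow_add_of_nonneg h (by norm_num) (by norm_num), Real.rpow_one]
  rw [gf, h1, ← Real.sqrt_eq_rpow]
  have := Real.sq_sqrt h
  calc _ = s ^ 2 * (√(M + s)) ^ 2 := by ring
    _ = _ := by rw [this]

lemma Gf_neg (M : ℝ) : Gf M (-M) = 0 := by
  simp [Gf]

lemma Gf_zero {M : ℝ} (h : 0 ≤ M) : Gf M 0 = -(4 / 15) * √M ^ 5 := by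
  have h1 : M ^ (3 / 2 : ℝ) = M * √M := by
    rw [Real.sqrt_eq_rpow, show (3 / 2 : ℝ) = 1 + 1 / 2 by norm_num,
      Real.rpow_add_of_nonneg h (by norm_num) (by norm_num), Real.rpow_one]
  have h2 : M ^ (5 / 2 : ℝ) = M ^ 2 * √M := by
    rw [Real.sqrt_eq_rpow, show (5 / 2 : ℝ) = 2 + 1 / 2 by norm_num,
      Real.rpow_add_of_nonneg h (by norm_num) (by norm_num)]
    norm_cast
  simp only [Gf, add_zero]
  rw [h1, h2]
  nth_rw 1 [← Real.sq_sqrt h]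
  nth_rw 3 [← Real.sq_sqrt h]
  nth_rw 4 [← Real.sq_sqrt h]
  ring

open Filter Topology Set in
lemma bounded_of {φ φ' : ℝ → ℝ} (h : H1Pair φ φ') (hl : LocallyIntegrable φ') :
    ∃ C, ∀ x, |φ x| ≤ C := by
  have ht : Tendsto φ (cocompact ℝ) (𝓝 0) := by
    rw [cocompact_eq_atBot_atTop]
    exact (tend_bot h hl).sup (tend_top h hl)
  have h1 : ∀ᶠ x in cocompact ℝ, |φ x| < 1 := by
    have := ht.abs
    simp only [abs_zero] at this
    exact this.eventually_lt_const (by norm_num)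
  obtain ⟨K, hK, hK2⟩ := mem_cocompact.1 h1
  obtain ⟨C, hC⟩ := hK.exists_bound_of_continuousOn h.1.continuousOn
  refine ⟨max C 1, fun x => ?_⟩
  by_cases hx : x ∈ K
  · exact (hC x hx).trans (le_max_left _ _)
  · exact (show |φ x| < 1 from hK2 hx).le.trans (le_max_right _ _)

open Filter Topology Set in
lemma cube_int {φ φ' : ℝ → ℝ} (h : H1Pair φ φ') (hl : LocallyIntegrable φ') :
    Integrable (fun x => φ x ^ 3) := by
  obtain ⟨C, hC⟩ := bounded_of h hl
  refine (h.2.1.const_mul C).mono (h.1.pow 3).aestronglyMeasurable ?_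
  filter_upwards with x
  have hC0 : 0 ≤ C := (abs_nonneg _).trans (hC x)
  rw [Real.norm_eq_abs, Real.norm_eq_abs, abs_mul, abs_pow, abs_pow, abs_of_nonneg hC0]
  have := hC x
  have h2 : 0 ≤ |φ x| ^ 2 := by positivity
  nlinarith

open Filter Topology Set in
lemma core {c d M x0 : ℝ} {φ φ' : ℝ → ℝ} (hc : 0 < c) (hd : 0 < d) (h : H1Pair φ φ')
    (hl : LocallyIntegrable φ') (hM : 0 ≤ M) (hx0 : φ x0 = -M) (hmin : ∀ x, -M ≤ φ x) :
    16 / 15 * (√c * √d) * √M ^ 5 ≤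
      (∫ x, (c * φ' x ^ 2 + d * φ x ^ 3)) + d * √M ^ 2 * ∫ x, φ x ^ 2 := by
  have hi1 : Integrable fun x => c * φ' x ^ 2 + d * φ x ^ 3 :=
    (h.2.2.1.const_mul c).add ((cube_int h hl).const_mul d)
  have hi2 : Integrable fun x => d * √M ^ 2 * φ x ^ 2 := h.2.1.const_mul _
  rw [← integral_const_mul, ← integral_add hi1 hi2]
  have hi : Integrable fun x => c * φ' x ^ 2 + d * φ x ^ 3 + d * √M ^ 2 * φ x ^ 2 :=
    hi1.add hi2
  have hpt : ∀ x, c * φ' x ^ 2 + d * φ x ^ 3 + d * √M ^ 2 * φ x ^ 2 =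
      (√c * φ' x) ^ 2 + (√d * gf M (φ x)) ^ 2 := by
    intro x
    rw [mul_pow, mul_pow, Real.sq_sqrt hc.le, Real.sq_sqrt hd.le, Real.sq_sqrt hM,
      gf_sq (by linarith [hmin x])]
    ring
  have hloc : ∀ a b, IntervalIntegrable (fun x => gf M (φ x) * φ' x) volume a b := by
    intro a b
    have : IntervalIntegrable φ' volume a b := intervalIntegrable_iff.mpr <|
      (hl.integrableOn_isCompact isCompact_uIcc).mono_set uIoc_subset_uIcc
    exact this.continuousOn_mul ((gf_cont M).comp h.1).continuousOn
  have hch : ∀ a b, a ≤ b → ∫ x in a..b, gf M (φ x) * φ' x = Gf M (φ b) - Gf M (φ a) :=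
    fun a b hab => chain_rule hl h.2.2.2 (Gf_deriv M) (gf_cont M) hab
  have hfin : ∀ R, |x0| ≤ R → 2 * (√c * √d) * (-Gf M (φ (-R)) - Gf M (φ R)) ≤
      ∫ x in (-R)..R, (c * φ' x ^ 2 + d * φ x ^ 3 + d * √M ^ 2 * φ x ^ 2) := by
    intro R hR
    obtain ⟨h1, h2⟩ := abs_le.1 hR
    have e1 : ∫ x in (-R)..x0, (2 * (√c * √d)) * (gf M (φ x) * φ' x) ≤
        ∫ x in (-R)..x0, (c * φ' x ^ 2 + d * φ x ^ 3 + d * √M ^ 2 * φ x ^ 2) := by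
      refine intervalIntegral.integral_mono_on h1 ((hloc _ _).const_mul _)
        hi.intervalIntegrable fun x _ => ?_
      rw [hpt]
      nlinarith [sq_nonneg (√c * φ' x - √d * gf M (φ x))]
    have e2 : ∫ x in x0..R, (-(2 * (√c * √d))) * (gf M (φ x) * φ' x) ≤
        ∫ x in x0..R, (c * φ' x ^ 2 + d * φ x ^ 3 + d * √M ^ 2 * φ x ^ 2) := by
      refine intervalIntegral.integral_mono_on h2 ((hloc _ _).const_mul _)
        hi.intervalIntegrable fun x _ => ?_
      rw [hpt]
      nlinarith [sq_nonneg (√c * φ' x + √d * gf M (φ x))]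
    rw [intervalIntegral.integral_const_mul, hch _ _ h1, hx0, Gf_neg] at e1
    rw [intervalIntegral.integral_const_mul, hch _ _ h2, hx0, Gf_neg] at e2
    rw [← intervalIntegral.integral_add_adjacent_intervals (b := x0)
      hi.intervalIntegrable hi.intervalIntegrable]
    linarith
  have hGc : Tendsto (Gf M) (𝓝 0) (𝓝 (Gf M 0)) := (Gf_deriv M 0).continuousAt
  have t1 := hGc.comp ((tend_bot h hl).comp tendsto_neg_atTop_atBot)
  have t2 := hGc.comp (tend_top h hl)
  have tl := ((t1.neg.sub t2).const_mul (2 * (√c * √d)))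
  have tr := intervalIntegral_tendsto_integral hi tendsto_neg_atTop_atBot tendsto_id
  have := le_of_tendsto_of_tendsto tl tr (by
    filter_upwards [eventually_ge_atTop |x0|] with R hR
    exact hfin R hR)
  rw [Gf_zero hM] at this
  refine le_trans (le_of_eq ?_) this
  ring

open Filter Topology Set in
lemma lower {c d A B : ℝ} {φ φ' : ℝ → ℝ} (hc : 0 < c) (hd : 0 < d) (hA : 0 < A) (hB : 0 < B)
    (hAB : 4 * c * B ^ 2 = d * A) (h : H1Pair φ φ') (hm : ∫ x, φ x ^ 2 = 4 / 3 * A ^ 2 / B) :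
    -(2 / 5) * d * A ^ 3 / B ≤ EKdV c d φ φ' := by
  have hl := loc_int h (by rw [hm]; positivity)
  by_cases hpos : ∀ x, 0 ≤ φ x
  · have h1 : 0 ≤ EKdV c d φ φ' := by
      unfold EKdV
      have : 0 ≤ ∫ x : ℝ, (c * (φ' x) ^ 2 + d * (φ x) ^ 3) :=
        integral_nonneg fun x => by have := hpos x; positivity
      linarith
    have h2 : 0 ≤ (2 / 5) * d * A ^ 3 / B := by positivity
    have h3 : -(2 / 5) * d * A ^ 3 / B = -((2 / 5) * d * A ^ 3 / B) := by ring
    linarith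
  · push Not at hpos
    obtain ⟨y, hy⟩ := hpos
    have ht : Tendsto φ (cocompact ℝ) (𝓝 0) := by
      rw [cocompact_eq_atBot_atTop]
      exact (tend_bot h hl).sup (tend_top h hl)
    obtain ⟨x0, hx0⟩ := h.1.exists_forall_le' y
      ((ht.eventually_const_lt hy).mono fun _ h => h.le)
    have hM : 0 ≤ -φ x0 := by linarith [hx0 y]
    have key := core (M := -φ x0) hc hd h hl hM (by ring) (by simpa using hx0)
    have hu : (√A) ^ 2 = A := Real.sq_sqrt hA.le
    have hs : √c * √d * √A = 2 * c * B := by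
      rw [← Real.sqrt_mul hc.le, ← Real.sqrt_mul (by positivity)]
      rw [show c * d * A = (2 * c * B) ^ 2 by linear_combination -c * hAB]
      exact Real.sqrt_sq (by positivity)
    have := final_ineq hc hB (Real.sqrt_nonneg _) (Real.sqrt_pos.2 hA) hs
      (by rw [hu]; exact hAB) (by rw [hu]; exact hm) key
    rw [hu] at this
    unfold EKdV
    have h3 : -(2 / 5) * d * A ^ 3 / B = (1 / 2) * (-(4 / 5) * d * A ^ 3 / B) := by ring
    linarith

lemma tanh_deriv (x : ℝ) : HasDerivAt Real.tanh (1 - Real.tanh x ^ 2) x := by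
  have hc := (Real.cosh_pos x).ne'
  have h := (Real.hasDerivAt_sinh x).div (Real.hasDerivAt_cosh x) hc
  have e : Real.tanh = Real.sinh / Real.cosh := by
    funext y; rw [Pi.div_apply, Real.tanh_eq_sinh_div_cosh]
  rw [e]
  refine h.congr_deriv ?_
  simp only [Pi.div_apply]
  field_simp

lemma sech_sq (x : ℝ) : sech x ^ 2 = 1 - Real.tanh x ^ 2 := by
  have hc := (Real.cosh_pos x).ne'
  rw [sech, Real.tanh_eq_sinh_div_cosh]
  field_simp
  linarith [Real.cosh_sq x]

open Filter Topology in
lemma tanh_top : Tendsto Real.tanh atTop (𝓝 1) := by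
  have e : ∀ x, Real.tanh x = 1 - 2 / (Real.exp (2 * x) + 1) := by
    intro x
    rw [Real.tanh_eq, Real.exp_neg, two_mul, Real.exp_add]
    have := Real.exp_pos x
    field_simp
    ring
  have h1 : Tendsto (fun x : ℝ => Real.exp (2 * x) + 1) atTop atTop :=
    tendsto_atTop_add_const_right _ _
      (Real.tendsto_exp_atTop.comp (tendsto_id.const_mul_atTop (by norm_num)))
  have h2 := (h1.const_div_atTop 2).const_sub 1
  rw [sub_zero] at h2
  exact h2.congr fun x => (e x).symm

open Filter Topology in
lemma tanh_bot : Tendsto Real.tanh atBot (𝓝 (-1)) := by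
  have := (tanh_top.comp tendsto_neg_atBot_atTop).neg
  refine this.congr fun x => ?_
  simp [Real.tanh_neg]

open Filter Topology Set in
lemma tanh_integral {B : ℝ} (hB : 0 < B) {P p : ℝ → ℝ} (hP : ∀ s, HasDerivAt P (p s) s)
    (hpc : Continuous p) (hpos : ∀ s, s ^ 2 ≤ 1 → 0 ≤ p s) :
    Integrable (fun x => p (Real.tanh (B * x)) * (1 - Real.tanh (B * x) ^ 2)) ∧
    ∫ x, p (Real.tanh (B * x)) * (1 - Real.tanh (B * x) ^ 2) = (P 1 - P (-1)) / B := by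
  have hd : ∀ x, HasDerivAt (fun x => P (Real.tanh (B * x)) / B)
      (p (Real.tanh (B * x)) * (1 - Real.tanh (B * x) ^ 2)) x := by
    intro x
    have h1 : HasDerivAt (fun x : ℝ => B * x) B x := by
      simpa using (hasDerivAt_id x).const_mul B
    have h2 := (((hP _).comp x ((tanh_deriv (B * x)).comp x h1))).div_const B
    refine h2.congr_deriv ?_
    simp only [Function.comp]
    field_simp
  have htc : Continuous Real.tanh :=
    continuous_iff_continuousAt.2 fun x => (tanh_deriv x).continuousAt
  have hcont : Continuous (fun x => p (Real.tanh (B * x)) * (1 - Real.tanh (B * x) ^ 2)) := by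
    fun_prop
  have hnn : ∀ x, 0 ≤ p (Real.tanh (B * x)) * (1 - Real.tanh (B * x) ^ 2) := fun x => by
    have := (Real.tanh_sq_lt_one (B * x)).le
    exact mul_nonneg (hpos _ this) (by linarith)
  have ttop : Tendsto (fun x => P (Real.tanh (B * x)) / B) atTop (𝓝 (P 1 / B)) :=
    (((hP 1).continuousAt.tendsto.comp tanh_top).comp
      (tendsto_id.const_mul_atTop hB)).div_const B
  have tbot : Tendsto (fun x => P (Real.tanh (B * x)) / B) atBot (𝓝 (P (-1) / B)) :=
    (((hP (-1)).continuousAt.tendsto.comp tanh_bot).comp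
      (tendsto_id.const_mul_atBot hB)).div_const B
  have hint : Integrable (fun x => p (Real.tanh (B * x)) * (1 - Real.tanh (B * x) ^ 2)) := by
    refine integrable_of_intervalIntegral_norm_tendsto (P 1 / B - P (-1) / B) (l := atTop)
      (a := fun n : ℝ => -n) (b := fun n : ℝ => n) (fun i => ?_) tendsto_neg_atTop_atBot
      tendsto_id ?_
    · exact (hcont.integrableOn_Icc).mono_set Ioc_subset_Icc_self
    · refine (ttop.sub (tbot.comp tendsto_neg_atTop_atBot)).congr fun n => ?_
      simp only [Real.norm_of_nonneg (hnn _), Function.comp]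
      exact (intervalIntegral.integral_eq_sub_of_hasDerivAt (fun x _ => hd x)
        (hcont.intervalIntegrable _ _)).symm
  refine ⟨hint, ?_⟩
  rw [integral_of_hasDerivAt_of_tendsto hd hint tbot ttop]
  ring

open Filter Topology Set in
lemma soliton {c d A B : ℝ} (hB : 0 < B)
    (hAB : 4 * c * B ^ 2 = d * A) {f : ℝ → ℝ} (hf : ∀ x, f x = -A * sech (B * x) ^ 2) :
    H1Pair f (deriv f) ∧ (∫ x, f x ^ 2) = 4 / 3 * A ^ 2 / B ∧
      EKdV c d f (deriv f) = -(2 / 5) * d * A ^ 3 / B := by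
  have hf' : f = fun x => -A * (1 - Real.tanh (B * x) ^ 2) := by
    funext x; rw [hf, sech_sq]
  have hd : ∀ x, HasDerivAt f
      (2 * A * B * (Real.tanh (B * x) * (1 - Real.tanh (B * x) ^ 2))) x := by
    intro x
    have h1 : HasDerivAt (fun x : ℝ => B * x) B x := by
      simpa using (hasDerivAt_id x).const_mul B
    have h2 := (((((tanh_deriv (B * x)).comp x h1).pow 2).const_sub 1).const_mul (-A))
    rw [hf']
    refine h2.congr_deriv ?_
    simp
    ring
  have hdf : deriv f = fun x => 2 * A * B * (Real.tanh (B * x) * (1 - Real.tanh (B * x) ^ 2)) :=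
    funext fun x => (hd x).deriv
  have htc : Continuous Real.tanh :=
    continuous_iff_continuousAt.2 fun x => (tanh_deriv x).continuousAt
  have hfc : Continuous f := by rw [hf']; fun_prop
  have hdc : Continuous (deriv f) := by rw [hdf]; fun_prop
  obtain ⟨i1, v1⟩ := tanh_integral hB (P := fun s => s - s ^ 3 / 3) (p := fun s => 1 - s ^ 2)
    (fun s => ((hasDerivAt_id s).sub ((hasDerivAt_pow 3 s).div_const 3)).congr_deriv
      (by norm_num)) (by fun_prop) (fun s hs => by linarith)
  obtain ⟨i2, v2⟩ := tanh_integral hB (P := fun s => s - 2 * (s ^ 3 / 3) + s ^ 5 / 5)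
    (p := fun s => (1 - s ^ 2) ^ 2)
    (fun s => (((hasDerivAt_id s).sub (((hasDerivAt_pow 3 s).div_const 3).const_mul 2)).add
      ((hasDerivAt_pow 5 s).div_const 5)).congr_deriv
      (by norm_num; ring)) (by fun_prop) (fun s hs => by positivity)
  obtain ⟨i3, v3⟩ := tanh_integral hB (P := fun s => s ^ 3 / 3 - s ^ 5 / 5)
    (p := fun s => s ^ 2 * (1 - s ^ 2))
    (fun s => ((((hasDerivAt_pow 3 s).div_const 3)).sub
      ((hasDerivAt_pow 5 s).div_const 5)).congr_deriv
      (by norm_num; ring)) (by fun_prop)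
      (fun s hs => mul_nonneg (sq_nonneg s) (by linarith))
  have e1 : (fun x => f x ^ 2) = fun x => A ^ 2 *
      ((1 - Real.tanh (B * x) ^ 2) * (1 - Real.tanh (B * x) ^ 2)) := by
    rw [hf']; funext x; ring
  have e2 : (fun x => f x ^ 3) = fun x => -A ^ 3 *
      ((1 - Real.tanh (B * x) ^ 2) ^ 2 * (1 - Real.tanh (B * x) ^ 2)) := by
    rw [hf']; funext x; ring
  have e3 : (fun x => deriv f x ^ 2) = fun x => 4 * A ^ 2 * B ^ 2 *
      (Real.tanh (B * x) ^ 2 * (1 - Real.tanh (B * x) ^ 2) * (1 - Real.tanh (B * x) ^ 2)) := by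
    rw [hdf]; funext x; ring
  have j1 : Integrable (fun x => f x ^ 2) := by rw [e1]; exact i1.const_mul _
  have j2 : Integrable (fun x => f x ^ 3) := by rw [e2]; exact i2.const_mul _
  have j3 : Integrable (fun x => deriv f x ^ 2) := by rw [e3]; exact i3.const_mul _
  refine ⟨⟨hfc, j1, j3, fun a b _ => ?_⟩, ?_, ?_⟩
  · exact (intervalIntegral.integral_eq_sub_of_hasDerivAt
      (fun x _ => (hd x).differentiableAt.hasDerivAt) (hdc.intervalIntegrable _ _)).symm
  · rw [e1, integral_const_mul, v1]
    ring
  · unfold EKdV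
    rw [integral_add (j3.const_mul c) (j2.const_mul d), integral_const_mul, integral_const_mul,
      e2, e3, integral_const_mul, integral_const_mul, v2, v3]
    field_simp
    linear_combination 4 * A ^ 2 * hAB


theorem stmt16 (ν₀ ω β : ℝ) (hν₀ : 0 < ν₀) (hβ : ν₀ ^ 2 / 3 < β)
    (c d αK cK : ℝ) (hc : c = β - ν₀ ^ 2 / 3) (hd : d = ω ^ 2 / 3 + 1)
    (hα : αK = 2 * (ω ^ 2 + 4) ^ (-(1 : ℝ) / 2))
    (hcK : cK = -(9 / 5) * (2 / 3 : ℝ) ^ ((1 : ℝ) / 3) * d ^ ((4 : ℝ) / 3) /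
      (c ^ ((1 : ℝ) / 3) * (ω ^ 2 + 4) ^ ((5 : ℝ) / 6)))
    (φK : ℝ → ℝ)
    (hφK : ∀ x, φK x = -Real.sqrt 3 * (3 / 16 : ℝ) ^ ((1 : ℝ) / 6) * d ^ ((1 : ℝ) / 3) /
      (c ^ ((1 : ℝ) / 3) * (ω ^ 2 + 4) ^ ((1 : ℝ) / 3)) *
      sech ((3 / 16 : ℝ) ^ ((1 : ℝ) / 3) * d ^ ((2 : ℝ) / 3) * x /
        (c ^ ((2 : ℝ) / 3) * (ω ^ 2 + 4) ^ ((1 : ℝ) / 6))) ^ 2) :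
    ∀ a : ℝ, 0 < a →
      (∀ φ φ' : ℝ → ℝ, H1Pair φ φ' → (∫ x : ℝ, (φ x) ^ 2) = 2 * a * αK →
        a ^ ((5 : ℝ) / 3) * cK ≤ EKdV c d φ φ') ∧
      H1Pair (fun x => a ^ ((2 : ℝ) / 3) * φK (a ^ ((1 : ℝ) / 3) * x))
        (deriv (fun x => a ^ ((2 : ℝ) / 3) * φK (a ^ ((1 : ℝ) / 3) * x))) ∧
      (∫ x : ℝ, (a ^ ((2 : ℝ) / 3) * φK (a ^ ((1 : ℝ) / 3) * x)) ^ 2) = 2 * a * αK ∧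
      EKdV c d (fun x => a ^ ((2 : ℝ) / 3) * φK (a ^ ((1 : ℝ) / 3) * x))
        (deriv (fun x => a ^ ((2 : ℝ) / 3) * φK (a ^ ((1 : ℝ) / 3) * x))) =
        a ^ ((5 : ℝ) / 3) * cK := by

  have hc0 : 0 < c := by rw [hc]; linarith
  have hd0 : 0 < d := by rw [hd]; positivity
  have hW0 : 0 < ω ^ 2 + 4 := by positivity
  intro a ha
  generalize ω ^ 2 + 4 = W at *
  have pw : ∀ {x : ℝ}, 0 < x → ∀ (e : ℝ) (n : ℕ) (y : ℝ), y = e * n → x ^ y = (x ^ e) ^ n := by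
    intro x hx e n y hy
    rw [hy, Real.rpow_mul hx.le, Real.rpow_natCast]
  obtain ⟨p, hp⟩ : ∃ p, p = a ^ ((1 : ℝ) / 3) := ⟨_, rfl⟩
  obtain ⟨q, hq⟩ : ∃ q, q = c ^ ((1 : ℝ) / 3) := ⟨_, rfl⟩
  obtain ⟨r, hr⟩ : ∃ r, r = d ^ ((1 : ℝ) / 3) := ⟨_, rfl⟩
  obtain ⟨w, hw⟩ : ∃ w, w = W ^ ((1 : ℝ) / 6) := ⟨_, rfl⟩
  obtain ⟨k, hk⟩ : ∃ k, k = (3 / 16 : ℝ) ^ ((1 : ℝ) / 6) := ⟨_, rfl⟩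
  obtain ⟨l, hl⟩ : ∃ l, l = (2 / 3 : ℝ) ^ ((1 : ℝ) / 3) := ⟨_, rfl⟩
  have hp0 : 0 < p := by rw [hp]; positivity
  have hq0 : 0 < q := by rw [hq]; positivity
  have hr0 : 0 < r := by rw [hr]; positivity
  have hw0 : 0 < w := by rw [hw]; positivity
  have hk0 : 0 < k := by rw [hk]; positivity
  have hl0 : 0 < l := by rw [hl]; positivity
  have a1 : a = p ^ 3 := by rw [hp, ← pw ha _ 3 1 (by norm_num), Real.rpow_one]
  have a2 : a ^ ((2 : ℝ) / 3) = p ^ 2 := by rw [hp]; exact pw ha _ 2 _ (by norm_num)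
  have a5 : a ^ ((5 : ℝ) / 3) = p ^ 5 := by rw [hp]; exact pw ha _ 5 _ (by norm_num)
  have c1 : c = q ^ 3 := by rw [hq, ← pw hc0 _ 3 1 (by norm_num), Real.rpow_one]
  have c2 : c ^ ((2 : ℝ) / 3) = q ^ 2 := by rw [hq]; exact pw hc0 _ 2 _ (by norm_num)
  have d1 : d = r ^ 3 := by rw [hr, ← pw hd0 _ 3 1 (by norm_num), Real.rpow_one]
  have d2 : d ^ ((2 : ℝ) / 3) = r ^ 2 := by rw [hr]; exact pw hd0 _ 2 _ (by norm_num)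
  have d4 : d ^ ((4 : ℝ) / 3) = r ^ 4 := by rw [hr]; exact pw hd0 _ 4 _ (by norm_num)
  have w2 : W ^ ((1 : ℝ) / 3) = w ^ 2 := by rw [hw]; exact pw hW0 _ 2 _ (by norm_num)
  have w5 : W ^ ((5 : ℝ) / 6) = w ^ 5 := by rw [hw]; exact pw hW0 _ 5 _ (by norm_num)
  have w3 : W ^ (-(1 : ℝ) / 2) = (w ^ 3)⁻¹ := by
    rw [hw, ← pw hW0 _ 3 (1 / 2) (by norm_num), ← Real.rpow_neg hW0.le]; norm_num
  have k6 : k ^ 6 = 3 / 16 := by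
    rw [hk, ← pw (by norm_num) _ 6 1 (by norm_num), Real.rpow_one]
  have k2 : (3 / 16 : ℝ) ^ ((1 : ℝ) / 3) = k ^ 2 := by
    rw [hk]; exact pw (by norm_num) _ 2 _ (by norm_num)
  have k3 : √3 = 4 * k ^ 3 := by
    rw [Real.sqrt_eq_iff_mul_self_eq (by norm_num) (by positivity)]
    linear_combination -16 * k6
  have l3 : l ^ 3 = 2 / 3 := by
    rw [hl, ← pw (by norm_num) _ 3 1 (by norm_num), Real.rpow_one]
  have l1 : l = 8 / 3 * k ^ 4 := by
    refine (pow_left_inj₀ hl0.le (by positivity) (show (3 : ℕ) ≠ 0 by norm_num)).1 ?_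
    rw [l3]
    linear_combination (-(512 / 27) * (k ^ 6 + 3 / 16)) * k6
  rw [← hl, d4, ← hq, w5] at hcK
  rw [w3] at hα
  simp only [← hk, ← hr, ← hq, w2, k2, d2, c2, ← hw, k3] at hφK
  rw [a2, a5, ← hp]
  clear hd hc hβ
  obtain ⟨A, hA⟩ : ∃ A, A = 4 * k ^ 4 * p ^ 2 * r / (q * w ^ 2) := ⟨_, rfl⟩
  obtain ⟨B, hB⟩ : ∃ B, B = k ^ 2 * r ^ 2 * p / (q ^ 2 * w) := ⟨_, rfl⟩
  have hA0 : 0 < A := by rw [hA]; positivity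
  have hB0 : 0 < B := by rw [hB]; positivity
  have hAB : 4 * c * B ^ 2 = d * A := by
    rw [hA, hB, c1, d1]; field_simp
  have hmass : 4 / 3 * A ^ 2 / B = 2 * a * αK := by
    rw [hA, hB, hα, a1]; field_simp
    linear_combination 64 * k6
  have hen : -(2 / 5) * d * A ^ 3 / B = p ^ 5 * cK := by
    rw [hA, hB, hcK, d1, l1]; field_simp
    linear_combination (-384) * k6
  obtain ⟨s1, s2, s3⟩ := soliton (c := c) (d := d) (A := A) (B := B) hB0 hAB
    (f := fun x => p ^ 2 * φK (p * x)) (fun x => by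
      simp only [hφK]
      rw [show k ^ 2 * r ^ 2 * (p * x) / (q ^ 2 * w) = B * x by rw [hB]; ring, hA]
      ring)
  rw [← hmass, ← hen]
  exact ⟨fun φ φ' h hm => lower hc0 hd0 hA0 hB0 hAB h hm, s1, s2, s3⟩
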